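/- arXiv:1907.06122 — 2 statements merged into one kernel-verified Lean document; each statement's English description precedes it below -/
import Mathlib

section
/- Let Ω ⊂ ℝⁿ be a bounded open convex set with nonempty interior and let h(Ω) = inf{ |∂X|/|X| : X ⊆ closure(Ω), X a bounded open convex set with nonempty interior } be its (convex) Cheeger constant. Then h(Ω) ≥ |∂Ω|/(n|Ω|). -/
open MeasureTheory

/-- The (convex) Cheeger constant of `Ω ⊂ ℝⁿ`: the infimum of `|∂X|/|X|` over bounded
open convex subsets `X` of the closure of `Ω` with nonempty interior. -/
noncomputable def cheegerConstant {n : ℕ} (Ω : Set (EuclideanSpace ℝ (Fin n))) : ℝ :=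
  sInf {r : ℝ | ∃ X : Set (EuclideanSpace ℝ (Fin n)),
    IsOpen X ∧ Bornology.IsBounded X ∧ Convex ℝ X ∧ (interior X).Nonempty ∧
    X ⊆ closure Ω ∧
    r = (μH[(n : ℝ) - 1] (frontier X)).toReal / (volume X).toReal}

/-!
A convex body `K` with inradius `ρ(K)` satisfies `|K| ≤ ρ(K) |∂K| ≤ n |K|`. For a polyhedron, the
cones over the facets with apex the centre of an inscribed ball of radius `r` are disjoint, fill
out `K` and have heights at least `r`, which gives the second inequality; the inward prisms of
height `ρ(K)` over the facets cover `K`, because the segment from a point to the nearest boundary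
point is normal to the facet it reaches, which gives the first. Both pass to general convex bodies
by polyhedral approximation, since surface area is monotone under inclusion of convex bodies. As
the inradius is monotone too, `X ⊆ Ω` implies
`|X| |∂Ω| ≤ ρ(X) |∂X| |∂Ω| ≤ ρ(Ω) |∂Ω| |∂X| ≤ n |Ω| |∂X|`.
-/

open Set Metric Module AffineMap
open scoped ENNReal RealInnerProductSpace

section Inradius

/-- The supremum of the radii of the open balls contained in `K`, as an extended real so that it
makes sense for unbounded `K`. -/
noncomputable def inradius {α : Type*} [PseudoMetricSpace α] (K : Set α) : ℝ≥0∞ :=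
  ⨆ (x : α) (r : ℝ) (_ : ball x r ⊆ K), ENNReal.ofReal r

lemma ofReal_le_inradius {α : Type*} [PseudoMetricSpace α] {K : Set α} {x : α} {r : ℝ}
    (h : ball x r ⊆ K) : ENNReal.ofReal r ≤ inradius K :=
  le_iSup₂_of_le x r (le_iSup_of_le h le_rfl)

lemma inradius_mono {α : Type*} [PseudoMetricSpace α] {K L : Set α} (h : K ⊆ L) :
    inradius K ≤ inradius L :=
  iSup₂_le fun _ _ => iSup_le fun hK => ofReal_le_inradius (hK.trans h)

lemma inradius_pos {α : Type*} [PseudoMetricSpace α] {K : Set α} (h : (interior K).Nonempty) :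
    0 < inradius K := by
  obtain ⟨x, hx⟩ := h
  obtain ⟨r, hr, hrK⟩ := Metric.mem_nhds_iff.1 (mem_interior_iff_mem_nhds.1 hx)
  exact (ENNReal.ofReal_pos.2 hr).trans_le (ofReal_le_inradius hrK)

lemma inradius_ne_top {E : Type*} [NormedAddCommGroup E] [NormedSpace ℝ E] [Nontrivial E]
    {K : Set E} (h : Bornology.IsBounded K) : inradius K ≠ ∞ := by
  refine ne_top_of_le_ne_top (ENNReal.ofReal_ne_top (r := diam K)) ?_
  refine iSup₂_le fun x r => iSup_le fun hK => ENNReal.ofReal_le_ofReal ?_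
  rcases le_total r 0 with hr | hr
  · exact hr.trans diam_nonneg
  · linarith [diam_ball_eq x hr, diam_mono hK h]

end Inradius

section FrontierMonotonicity

lemma subset_interior_of_isPreconnected_of_disjoint_frontier {α : Type*} [TopologicalSpace α]
    {s u : Set α} (hs : IsPreconnected s) (hsu : Disjoint s (frontier u))
    (hne : (s ∩ closure u).Nonempty) : s ⊆ interior u := by
  have mem_interior {x : α} (hxs : x ∈ s) (hxu : x ∈ closure u) : x ∈ interior u :=
    by_contra fun hx => hsu.notMem_of_mem_left hxs ⟨hxu, hx⟩
  obtain ⟨x, hxs, hxu⟩ := hne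
  exact hs.subset_of_closure_inter_subset isOpen_interior ⟨x, hxs, mem_interior hxs hxu⟩
    fun z ⟨hzu, hzs⟩ => mem_interior hzs (closure_mono interior_subset hzu)

lemma exists_add_smul_mem_frontier {E : Type*} [NormedAddCommGroup E] [NormedSpace ℝ E]
    {L : Set E} (hL : Bornology.IsBounded L) {y v : E} (hy : y ∈ closure L) (hv : v ≠ 0) :
    ∃ t : ℝ, 0 ≤ t ∧ y + t • v ∈ frontier L := by
  by_contra! no_exit
  have ray_subset : (fun t : ℝ => y + t • v) '' Ici 0 ⊆ interior L := by
    refine subset_interior_of_isPreconnected_of_disjoint_frontier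
      (isPreconnected_Ici.image _ (by fun_prop)) ?_ ⟨y, ⟨0, self_mem_Ici, by simp⟩, hy⟩
    rw [disjoint_left]
    rintro _ ⟨t, ht, rfl⟩
    exact no_exit t ht
  obtain ⟨C, hC⟩ := hL.exists_norm_le
  have hvpos : 0 < ‖v‖ := norm_pos_iff.2 hv
  have hC₀ : 0 ≤ C :=
    (norm_nonneg _).trans (hC _ (interior_subset (ray_subset ⟨0, self_mem_Ici, rfl⟩)))
  have ht : 0 ≤ (C + ‖y‖ + 1) / ‖v‖ := by positivity
  have far_mem := hC _ (interior_subset (ray_subset ⟨_, ht, rfl⟩))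
  have := norm_sub_le_norm_add (((C + ‖y‖ + 1) / ‖v‖) • v) y
  rw [norm_smul, Real.norm_of_nonneg ht, div_mul_cancel₀ _ hvpos.ne', add_comm _ y] at this
  linarith

variable {E : Type*} [NormedAddCommGroup E] [InnerProductSpace ℝ E]

lemma exists_supporting_normal [CompleteSpace E] {K : Set E} (hKo : IsOpen K) (hKc : Convex ℝ K)
    {y : E} (hy : y ∈ frontier K) :
    ∃ ν : E, ν ≠ 0 ∧ ∀ y' ∈ closure K, ⟪ν, y' - y⟫ ≤ 0 := by
  rw [hKo.frontier_eq] at hy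
  obtain ⟨f, hf⟩ := geometric_hahn_banach_open_point hKc hKo hy.2
  obtain ⟨ν, rfl⟩ := (InnerProductSpace.toDual ℝ E).surjective f
  simp only [InnerProductSpace.toDual_apply_apply] at hf
  refine ⟨ν, ?_, fun y' hy' => ?_⟩
  · rintro rfl
    obtain ⟨a, ha⟩ := closure_nonempty_iff.1 ⟨y, hy.1⟩
    simpa using hf a ha
  · have halfSpace_closed : IsClosed {z | ⟪ν, z - y⟫ ≤ 0} :=
      isClosed_le (by fun_prop) continuous_const
    refine closure_minimal (fun a ha => ?_) halfSpace_closed hy'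
    rw [mem_ofPred_eq, inner_sub_right]
    exact sub_nonpos.2 (hf a ha).le

lemma exists_mem_frontier_inner_sub_nonpos [CompleteSpace E] {K L : Set E} (hKo : IsOpen K)
    (hKc : Convex ℝ K) (hKL : K ⊆ L) (hL : Bornology.IsBounded L) {y : E} (hy : y ∈ frontier K) :
    ∃ z ∈ frontier L, ∀ y' ∈ closure K, ⟪z - y, y' - y⟫ ≤ 0 := by
  obtain ⟨ν, hν, supporting⟩ := exists_supporting_normal hKo hKc hy
  obtain ⟨t, ht, hz⟩ := exists_add_smul_mem_frontier hL (closure_mono hKL hy.1) hν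
  refine ⟨_, hz, fun y' hy' => ?_⟩
  rw [add_sub_cancel_left, real_inner_smul_left]
  exact mul_nonpos_of_nonneg_of_nonpos ht (supporting y' hy')

lemma norm_sub_le_norm_sub_of_inner_sub_nonpos {a b a' b' : E} (ha : ⟪a' - a, b - a⟫ ≤ 0)
    (hb : ⟪b' - b, a - b⟫ ≤ 0) : ‖a - b‖ ≤ ‖a' - b'‖ := by
  have sq_le : ‖a - b‖ * ‖a - b‖ ≤ ‖a' - b'‖ * ‖a - b‖ := calc
    ‖a - b‖ * ‖a - b‖ = ⟪a' - b', a - b⟫ + (⟪a' - a, b - a⟫ + ⟪b' - b, a - b⟫) := by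
      rw [← real_inner_self_eq_norm_mul_norm]
      simp only [inner_sub_left, inner_sub_right]
      ring
    _ ≤ ⟪a' - b', a - b⟫ := by linarith
    _ ≤ ‖a' - b'‖ * ‖a - b‖ := real_inner_le_norm _ _
  rcases (norm_nonneg (a - b)).eq_or_lt with h | h
  · exact h ▸ norm_nonneg _
  · exact le_of_mul_le_mul_right sq_le h

variable [MeasurableSpace E] [BorelSpace E]

/-- Sending a point of `∂K` along an outer normal of `K` until it hits `∂L` does not decrease
distances: it inverts the nearest-point projection onto `K`. -/
theorem hausdorffMeasure_frontier_le_of_convex_subset [CompleteSpace E] {K L : Set E}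
    (hKo : IsOpen K) (hKc : Convex ℝ K) (hKL : K ⊆ L) (hL : Bornology.IsBounded L) {d : ℝ}
    (hd : 0 ≤ d) : μH[d] (frontier K) ≤ μH[d] (frontier L) := by
  choose g g_mem g_outward using fun y : frontier K =>
    exists_mem_frontier_inner_sub_nonpos hKo hKc hKL hL y.2
  have g_antilipschitz : AntilipschitzWith 1 g := by
    refine AntilipschitzWith.of_le_mul_dist fun a b => ?_
    rw [NNReal.coe_one, one_mul, Subtype.dist_eq, dist_eq_norm, dist_eq_norm]
    exact norm_sub_le_norm_sub_of_inner_sub_nonpos (g_outward a b (frontier_subset_closure b.2))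
      (g_outward b a (frontier_subset_closure a.2))
  calc μH[d] (frontier K) = μH[d] (univ : Set (frontier K)) := by
        rw [← (isometry_subtype_coe (s := frontier K)).hausdorffMeasure_image (.inl hd),
          image_univ, Subtype.range_coe]
    _ ≤ μH[d] (g '' univ) := by
        simpa using g_antilipschitz.le_hausdorffMeasure_image hd univ
    _ ≤ μH[d] (frontier L) := measure_mono (image_subset_iff.2 fun y _ => g_mem y)

/-- The surface area of `K`: the measure of its frontier in codimension one, with the Hausdorff
measure normalised to agree with Lebesgue measure on hyperplanes. -/
noncomputable def surfaceArea (K : Set E) : ℝ≥0∞ :=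
  μHE[finrank ℝ E - 1] (frontier K)

lemma surfaceArea_le_of_convex_subset [CompleteSpace E] {K L : Set E} (hKo : IsOpen K)
    (hKc : Convex ℝ K) (hKL : K ⊆ L) (hL : Bornology.IsBounded L) :
    surfaceArea K ≤ surfaceArea L := by
  simp only [surfaceArea, Measure.euclideanHausdorffMeasure_def, Measure.smul_apply]
  gcongr ?_ • ?_
  exact hausdorffMeasure_frontier_le_of_convex_subset hKo hKc hKL hL (Nat.cast_nonneg _)

end FrontierMonotonicity

section Cones

variable {E : Type*} [NormedAddCommGroup E] [NormedSpace ℝ E] {K : Set E} {x : E}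

/-- The cone with apex `x` and base `F`. Apex and base are left out, so that the cones over disjoint
parts of the frontier of a convex set are disjoint. -/
def openCone (x : E) (F : Set E) : Set E :=
  ⋃ y ∈ F, openSegment ℝ x y

lemma openSegment_subset_of_mem_closure (hKo : IsOpen K) (hKc : Convex ℝ K) (hx : x ∈ K) {y : E}
    (hy : y ∈ closure K) : openSegment ℝ x y ⊆ K := by
  simpa only [hKo.interior_eq] using
    hKc.openSegment_interior_closure_subset_interior (hKo.interior_eq.symm ▸ hx) hy

lemma eq_of_mem_openSegment_of_mem_frontier (hKo : IsOpen K) (hKc : Convex ℝ K) (hx : x ∈ K)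
    {y y' z : E} (hy : y ∈ frontier K) (hy' : y' ∈ frontier K) (hz : z ∈ openSegment ℝ x y)
    (hz' : z ∈ openSegment ℝ x y') : y = y' := by
  rw [openSegment_eq_image_lineMap] at hz hz'
  obtain ⟨s, ⟨hs, -⟩, rfl⟩ := hz
  obtain ⟨t, ⟨ht, -⟩, hst⟩ := hz'
  wlog h : s ≤ t generalizing s t y y'
  · exact (this hy' hy t ht s hst.symm hs (le_of_not_ge h)).symm
  have y'_eq : y' = lineMap x y (s / t) := by
    simp only [lineMap_apply, vsub_eq_sub, vadd_eq_add, add_left_inj] at hst ⊢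
    rw [div_eq_inv_mul, mul_smul, ← hst, inv_smul_smul₀ ht.ne', sub_add_cancel]
  have s_eq_t : s = t := by
    refine h.eq_of_not_lt fun hlt => ?_
    rw [hKo.frontier_eq] at hy hy'
    refine hy'.2 (openSegment_subset_of_mem_closure hKo hKc hx hy.1 ?_)
    rw [openSegment_eq_image_lineMap]
    exact ⟨s / t, ⟨by positivity, (div_lt_one ht).2 hlt⟩, y'_eq.symm⟩
  rw [y'_eq, s_eq_t, div_self ht.ne', lineMap_apply_one]

lemma openCone_subset (hKo : IsOpen K) (hKc : Convex ℝ K) (hx : x ∈ K) {F : Set E}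
    (hF : F ⊆ frontier K) : openCone x F ⊆ K :=
  iUnion₂_subset fun _ hy =>
    openSegment_subset_of_mem_closure hKo hKc hx (frontier_subset_closure (hF hy))

lemma disjoint_openCone (hKo : IsOpen K) (hKc : Convex ℝ K) (hx : x ∈ K) {F G : Set E}
    (hF : F ⊆ frontier K) (hG : G ⊆ frontier K) (hFG : Disjoint F G) :
    Disjoint (openCone x F) (openCone x G) := by
  refine disjoint_left.2 fun z hzF hzG => ?_
  obtain ⟨y, hy, hzy⟩ := mem_iUnion₂.1 hzF
  obtain ⟨y', hy', hzy'⟩ := mem_iUnion₂.1 hzG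
  have := eq_of_mem_openSegment_of_mem_frontier hKo hKc hx (hF hy) (hG hy') hzy hzy'
  exact disjoint_left.1 hFG hy (this ▸ hy')

end Cones

section Slicing

variable {E : Type*} [NormedAddCommGroup E] [InnerProductSpace ℝ E]

/-- The prism with base `F` swept out by the translates of `F` by `t • ν`, `t ∈ I`. For `F` in a
hyperplane with unit normal `ν` its volume is base times height; a negative `t` points inwards when
`ν` is an outer normal. -/
def prism (ν : E) (I : Set ℝ) (F : Set E) : Set E :=
  {z | ∃ t ∈ I, z - t • ν ∈ F}

lemma mem_prism_iff_of_inner_eq {ν : E} (hν : ‖ν‖ = 1) {I : Set ℝ} {F : Set E} {h : ℝ}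
    (hF : ∀ y ∈ F, ⟪ν, y⟫ = h) {z : E} :
    z ∈ prism ν I F ↔ ⟪ν, z⟫ - h ∈ I ∧ z - (⟪ν, z⟫ - h) • ν ∈ F := by
  refine ⟨fun ⟨t, htI, htF⟩ => ?_, fun hz => ⟨_, hz⟩⟩
  have ht : ⟪ν, z⟫ - h = t := by
    have := hF _ htF
    rw [inner_sub_right, real_inner_smul_right, real_inner_self_eq_norm_sq, hν] at this
    linarith
  exact ht ▸ ⟨htI, htF⟩

lemma mem_openCone_iff_of_inner_eq {x ν : E} {F : Set E} {h : ℝ} (hh : 0 < h)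
    (hF : ∀ y ∈ F, ⟪ν, y - x⟫ = h) {z : E} :
    z ∈ openCone x F ↔
      ⟪ν, z - x⟫ ∈ Ioo 0 h ∧ homothety x (h / ⟪ν, z - x⟫) z ∈ F := by
  simp only [openCone, mem_iUnion₂, exists_prop, openSegment_eq_image_lineMap, mem_image,
    homothety_apply, vsub_eq_sub, vadd_eq_add]
  constructor
  · rintro ⟨y, hy, t, ⟨ht₀, ht₁⟩, rfl⟩
    have height : ⟪ν, lineMap x y t - x⟫ = t * h := by
      rw [lineMap_apply, vsub_eq_sub, vadd_eq_add, add_sub_cancel_right, real_inner_smul_right,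
        hF y hy]
    refine ⟨height ▸ ⟨by positivity, by nlinarith⟩, ?_⟩
    rw [height, lineMap_apply, vsub_eq_sub, vadd_eq_add, add_sub_cancel_right, smul_smul,
      div_mul_cancel_right₀ (by positivity), inv_mul_cancel₀ ht₀.ne', one_smul]
    simpa
  · rintro ⟨⟨hz₀, hz₁⟩, hz⟩
    refine ⟨_, hz, ⟪ν, z - x⟫ / h, ⟨by positivity, (div_lt_one hh).2 hz₁⟩, ?_⟩
    rw [lineMap_apply, vsub_eq_sub, vadd_eq_add, add_sub_cancel_right, smul_smul,
      div_mul_div_cancel₀ hh.ne', div_self hz₀.ne', one_smul, sub_add_cancel]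

variable [MeasurableSpace E] [BorelSpace E]

lemma euclideanHausdorffMeasure_prism_slice {d : ℕ} {ν : E} (hν : ‖ν‖ = 1) {I : Set ℝ} {F : Set E}
    {h : ℝ} (hF : ∀ y ∈ F, ⟪ν, y⟫ = h) (s : ℝ) :
    μHE[d] (prism ν I F ∩ {z | ⟪ν, z⟫ = s}) = ((· - h) ⁻¹' I).indicator (fun _ => μHE[d] F) s := by
  by_cases hs : s - h ∈ I
  · have slice_eq : prism ν I F ∩ {z | ⟪ν, z⟫ = s} = (· - (s - h) • ν) ⁻¹' F := by
      ext z
      simp only [mem_inter_iff, mem_prism_iff_of_inner_eq hν hF, mem_ofPred_eq, mem_preimage]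
      refine ⟨fun ⟨⟨_, hz⟩, hzs⟩ => hzs ▸ hz, fun hz => ?_⟩
      have hzs : ⟪ν, z⟫ = s := by
        have := hF _ hz
        rw [inner_sub_right, real_inner_smul_right, real_inner_self_eq_norm_sq, hν] at this
        linarith
      exact ⟨hzs.symm ▸ ⟨hs, hz⟩, hzs⟩
    simp_rw [slice_eq, sub_eq_add_neg _ ((s - h) • ν)]
    rw [measure_preimage_add_right, indicator_of_mem (by exact hs)]
  · have slice_eq : prism ν I F ∩ {z | ⟪ν, z⟫ = s} = ∅ :=
      eq_empty_of_forall_notMem fun z ⟨hz, hzs⟩ =>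
        hs (hzs ▸ ((mem_prism_iff_of_inner_eq hν hF).1 hz).1)
    rw [slice_eq, measure_empty, indicator_of_notMem (by exact hs)]

lemma euclideanHausdorffMeasure_openCone_slice {d : ℕ} {x ν : E} {F : Set E} {h : ℝ} (hh : 0 < h)
    (hF : ∀ y ∈ F, ⟪ν, y - x⟫ = h) (s : ℝ) :
    μHE[d] (openCone x F ∩ {z | ⟪ν, z - x⟫ = s}) =
      (Ioo 0 h).indicator (fun s => ENNReal.ofReal ((s / h) ^ d) * μHE[d] F) s := by
  by_cases hs : s ∈ Ioo 0 h
  · have slice_eq : openCone x F ∩ {z | ⟪ν, z - x⟫ = s} = homothety x (h / s) ⁻¹' F := by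
      ext z
      simp only [mem_inter_iff, mem_openCone_iff_of_inner_eq hh hF, mem_ofPred_eq, mem_preimage]
      refine ⟨fun ⟨⟨_, hz⟩, hzs⟩ => hzs ▸ hz, fun hz => ?_⟩
      have hzs : ⟪ν, z - x⟫ = s := by
        have := hF _ hz
        rw [homothety_apply, vsub_eq_sub, vadd_eq_add, add_sub_cancel_right,
          real_inner_smul_right, div_mul_eq_mul_div, div_eq_iff hs.1.ne'] at this
        exact mul_left_cancel₀ hh.ne' this
      exact ⟨hzs.symm ▸ ⟨hs, hz⟩, hzs⟩
    rw [slice_eq, euclideanHausdorffMeasure_homothety_preimage d x (div_pos hh hs.1).ne',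
      indicator_of_mem hs, ENNReal.smul_def, smul_eq_mul, ← nnnorm_inv, inv_div, ← nnnorm_pow,
      ← Real.enorm_of_nonneg (pow_nonneg (div_nonneg hs.1.le hh.le) d)]
    rfl
  · have slice_eq : openCone x F ∩ {z | ⟪ν, z - x⟫ = s} = ∅ :=
      eq_empty_of_forall_notMem fun z ⟨hz, hzs⟩ =>
        hs (hzs ▸ ((mem_openCone_iff_of_inner_eq hh hF).1 hz).1)
    rw [slice_eq, measure_empty, indicator_of_notMem hs]

variable [FiniteDimensional ℝ E]

lemma volume_eq_lintegral_inner_slice (x : E) {ν : E} (hν : ‖ν‖ = 1) {A : Set E}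
    (hA : MeasurableSet A) :
    volume A = ∫⁻ s : ℝ, μHE[finrank ℝ E - 1] (A ∩ {z | ⟪ν, z - x⟫ = s}) := by
  have hν₀ : ν ≠ 0 := norm_pos_iff.1 (hν ▸ one_pos)
  have slice_eq (s : ℝ) :
      (AffineSubspace.mk' (s • ν +ᵥ x) (ℝ ∙ ν)ᗮ : Set E) = {z | ⟪ν, z - x⟫ = s} := by
    ext z
    simp only [SetLike.mem_coe, AffineSubspace.mem_mk',
      Submodule.mem_orthogonal_singleton_iff_inner_right, vsub_eq_sub, vadd_eq_add,
      sub_add_eq_sub_sub_swap, inner_sub_right ν (z - x),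
      real_inner_smul_right, real_inner_self_eq_norm_sq, hν, one_pow, mul_one, sub_eq_zero,
      mem_ofPred_eq]
  rw [← InnerProductSpace.euclideanHausdorffMeasure_eq_volume,
    EuclideanGeometry.euclideanHausdorffMeasure_eq_lintegral x hν₀ hA, ← ofReal_norm, hν,
    ENNReal.ofReal_one, one_mul]
  simp_rw [slice_eq]

lemma measurableSet_prism {ν : E} (hν : ‖ν‖ = 1) {I : Set ℝ} (hI : MeasurableSet I) {F : Set E}
    (hFm : MeasurableSet F) {h : ℝ} (hF : ∀ y ∈ F, ⟪ν, y⟫ = h) :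
    MeasurableSet (prism ν I F) := by
  have height : Measurable fun z : E => ⟪ν, z⟫ - h := by fun_prop
  have foot : Measurable fun z : E => z - (⟪ν, z⟫ - h) • ν := by fun_prop
  have prism_eq : prism ν I F = (fun z => ⟪ν, z⟫ - h) ⁻¹' I ∩
      (fun z => z - (⟪ν, z⟫ - h) • ν) ⁻¹' F :=
    Set.ext fun z => mem_prism_iff_of_inner_eq hν hF
  exact prism_eq ▸ (height hI).inter (foot hFm)

lemma volume_prism {ν : E} (hν : ‖ν‖ = 1) {I : Set ℝ} (hI : MeasurableSet I) {F : Set E}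
    (hFm : MeasurableSet F) {h : ℝ} (hF : ∀ y ∈ F, ⟪ν, y⟫ = h) :
    volume (prism ν I F) = volume I * μHE[finrank ℝ E - 1] F := by
  simp_rw [volume_eq_lintegral_inner_slice 0 hν (measurableSet_prism hν hI hFm hF), sub_zero,
    euclideanHausdorffMeasure_prism_slice hν hF]
  rw [lintegral_indicator_const (measurable_sub_const h hI)]
  simp_rw [sub_eq_add_neg, measure_preimage_add_right, mul_comm]

lemma measurableSet_openCone {x ν : E} {F : Set E} (hFm : MeasurableSet F) {h : ℝ} (hh : 0 < h)
    (hF : ∀ y ∈ F, ⟪ν, y - x⟫ = h) : MeasurableSet (openCone x F) := by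
  have height : Measurable fun z : E => ⟪ν, z - x⟫ := by fun_prop
  have foot : Measurable fun z : E => homothety x (h / ⟪ν, z - x⟫) z := by
    simp only [homothety_apply, vsub_eq_sub, vadd_eq_add]
    fun_prop
  have openCone_eq : openCone x F = (fun z => ⟪ν, z - x⟫) ⁻¹' Ioo 0 h ∩
      (fun z => homothety x (h / ⟪ν, z - x⟫) z) ⁻¹' F :=
    Set.ext fun z => mem_openCone_iff_of_inner_eq hh hF
  exact openCone_eq ▸ (height measurableSet_Ioo).inter (foot hFm)

lemma lintegral_Ioo_ofReal_div_pow {h : ℝ} (hh : 0 < h) (d : ℕ) :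
    ∫⁻ s in Ioo 0 h, ENNReal.ofReal ((s / h) ^ d) = ENNReal.ofReal (h / (d + 1)) := by
  have integrable : IntegrableOn (fun s : ℝ => (s / h) ^ d) (Ioo 0 h) :=
    (Continuous.integrableOn_Icc (by fun_prop)).mono_set Ioo_subset_Icc_self
  rw [← ofReal_integral_eq_lintegral_ofReal integrable
    ((ae_restrict_mem measurableSet_Ioo).mono fun s hs => by have := hs.1; positivity),
    ← integral_Ioc_eq_integral_Ioo, ← intervalIntegral.integral_of_le hh.le]
  simp only [div_pow, intervalIntegral.integral_div, integral_pow]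
  congr 1
  field_simp
  simp [pow_succ]

lemma finrank_mul_volume_openCone {x ν : E} (hν : ‖ν‖ = 1) {F : Set E} (hFm : MeasurableSet F)
    {h : ℝ} (hh : 0 < h) (hF : ∀ y ∈ F, ⟪ν, y - x⟫ = h) :
    finrank ℝ E * volume (openCone x F) = ENNReal.ofReal h * μHE[finrank ℝ E - 1] F := by
  have : Nontrivial E := ⟨ν, 0, norm_pos_iff.1 (hν ▸ one_pos)⟩
  have finrank_eq : ((finrank ℝ E - 1 : ℕ) : ℝ) + 1 = finrank ℝ E := by
    exact_mod_cast Nat.sub_add_cancel (finrank_pos (R := ℝ) (M := E))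
  have finrank_pos : (0 : ℝ) < finrank ℝ E := by exact_mod_cast finrank_pos (R := ℝ) (M := E)
  rw [volume_eq_lintegral_inner_slice x hν (measurableSet_openCone hFm hh hF)]
  simp_rw [euclideanHausdorffMeasure_openCone_slice hh hF]
  rw [lintegral_indicator measurableSet_Ioo, lintegral_mul_const _ (by fun_prop),
    lintegral_Ioo_ofReal_div_pow hh, finrank_eq, ← mul_assoc, ← ENNReal.ofReal_natCast,
    ← ENNReal.ofReal_mul (by positivity), mul_div_cancel₀ _ finrank_pos.ne']

end Slicing

section Polyhedra

variable {E : Type*} [NormedAddCommGroup E] [InnerProductSpace ℝ E] {ι : Type*}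

/-- The open polyhedron cut out by the half-spaces with outer normals `ν i` and offsets `h i`,
approximating convex bodies from outside. The indexed half-spaces need be neither distinct nor
irredundant. -/
def polyhedron (ν : ι → E) (h : ι → ℝ) : Set E :=
  {x | ∀ i, ⟪ν i, x⟫ < h i}

lemma isOpen_polyhedron [Finite ι] (ν : ι → E) (h : ι → ℝ) : IsOpen (polyhedron ν h) := by
  simp only [polyhedron, ofPred_forall]
  exact isOpen_iInter_of_finite fun i => isOpen_lt (by fun_prop) continuous_const

lemma convex_polyhedron (ν : ι → E) (h : ι → ℝ) : Convex ℝ (polyhedron ν h) := by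
  simp only [polyhedron, ofPred_forall]
  exact convex_iInter fun i => convex_halfSpace_lt (innerₛₗ ℝ (ν i)).isLinear (h i)

variable {ν : ι → E} {h : ι → ℝ}

lemma inner_le_of_mem_closure_polyhedron {x : E} (hx : x ∈ closure (polyhedron ν h)) (i : ι) :
    ⟪ν i, x⟫ ≤ h i :=
  closure_minimal (t := {x | ⟪ν i, x⟫ ≤ h i}) (fun _ hy => (hy i).le)
    (isClosed_le (by fun_prop) continuous_const) hx

lemma inner_add_le_of_ball_subset_polyhedron {x : E} {r : ℝ} (hr : 0 < r)
    (hball : ball x r ⊆ polyhedron ν h) {i : ι} (hν : ‖ν i‖ = 1) : ⟪ν i, x⟫ + r ≤ h i := by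
  have tip_mem : x + r • ν i ∈ closure (polyhedron ν h) := by
    refine closure_mono hball ?_
    rw [closure_ball x hr.ne', mem_closedBall, dist_self_add_left, norm_smul, hν, mul_one,
      Real.norm_of_nonneg hr.le]
  have := inner_le_of_mem_closure_polyhedron tip_mem i
  rwa [inner_add_right, real_inner_smul_right, real_inner_self_eq_norm_sq, hν, one_pow,
    mul_one] at this

lemma exists_inner_eq_of_mem_frontier_polyhedron [Finite ι] {y : E}
    (hy : y ∈ frontier (polyhedron ν h)) : ∃ i, ⟪ν i, y⟫ = h i := by
  rw [(isOpen_polyhedron ν h).frontier_eq] at hy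
  obtain ⟨i, hi⟩ := not_forall.1 hy.2
  exact ⟨i, (inner_le_of_mem_closure_polyhedron hy.1 i).antisymm (not_lt.1 hi)⟩

lemma exists_measurable_partition_frontier_polyhedron [MeasurableSpace E] [BorelSpace E] {k : ℕ}
    (ν : Fin k → E) (h : Fin k → ℝ) :
    ∃ F : Fin k → Set E, (∀ i, MeasurableSet (F i)) ∧ Pairwise (Function.onFun Disjoint F) ∧
      ⋃ i, F i = frontier (polyhedron ν h) ∧ ∀ i, ∀ y ∈ F i, ⟪ν i, y⟫ = h i := by
  set facet : Fin k → Set E := fun i => frontier (polyhedron ν h) ∩ {y | ⟪ν i, y⟫ = h i}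
  have measurableSet_facet (i : Fin k) : MeasurableSet (facet i) :=
    (isClosed_frontier.inter (isClosed_eq (by fun_prop) continuous_const)).measurableSet
  refine ⟨disjointed facet, fun i => ?_, disjoint_disjointed facet, ?_,
    fun i y hy => (disjointed_subset facet i hy).2⟩
  · exact disjointedRec (fun _ _ ht => ht.diff (measurableSet_facet _)) (measurableSet_facet i)
  · rw [iUnion_disjointed, ← inter_iUnion, inter_eq_left]
    exact fun y hy => mem_iUnion.2 (exists_inner_eq_of_mem_frontier_polyhedron hy)

lemma eq_norm_smul_of_norm_le_inner {ν v : E} (hν : ‖ν‖ = 1) (hv : ‖v‖ ≤ ⟪ν, v⟫) :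
    v = ‖v‖ • ν := by
  have inner_eq : ⟪ν, v⟫ = ‖ν‖ * ‖v‖ :=
    (real_inner_le_norm ν v).antisymm (by rwa [hν, one_mul])
  rw [inner_eq_norm_mul_iff_real.1 inner_eq, hν, one_smul]

lemma polyhedron_subset_iUnion_prism [FiniteDimensional ℝ E] [Nontrivial E] [Finite ι]
    (hν : ∀ i, ‖ν i‖ = 1) (hb : Bornology.IsBounded (polyhedron ν h)) {F : ι → Set E}
    (hF_union : ⋃ i, F i = frontier (polyhedron ν h)) (hF : ∀ i, ∀ y ∈ F i, ⟪ν i, y⟫ = h i) :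
    polyhedron ν h ⊆
      ⋃ i, prism (ν i) (Icc (-(inradius (polyhedron ν h)).toReal) 0) (F i) := by
  intro x hx
  have ne_univ : polyhedron ν h ≠ univ := fun hu => NormedSpace.unbounded_univ ℝ E (hu ▸ hb)
  obtain ⟨y, hy, hxy⟩ := exists_mem_frontier_infDist_compl_eq_dist hx ne_univ
  have hball : ball x (dist x y) ⊆ polyhedron ν h := hxy ▸ ball_infDist_compl_subset
  have hpos : 0 < dist x y := by
    rw [(isOpen_polyhedron ν h).frontier_eq] at hy
    exact dist_pos.2 (ne_of_mem_of_not_mem hx hy.2)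
  have le_inradius : dist x y ≤ (inradius (polyhedron ν h)).toReal :=
    (ENNReal.ofReal_le_iff_le_toReal (inradius_ne_top hb)).1 (ofReal_le_inradius hball)
  obtain ⟨i, hi⟩ := mem_iUnion.1 (hF_union.symm ▸ hy)
  -- The ball about `x` touches the facet at `y`, so equality holds in Cauchy–Schwarz.
  have y_sub_x : y - x = dist x y • ν i := by
    have tangent := inner_add_le_of_ball_subset_polyhedron hpos hball (hν i)
    rw [dist_comm, dist_eq_norm] at tangent ⊢
    refine eq_norm_smul_of_norm_le_inner (hν i) ?_
    rw [inner_sub_right, hF i y hi]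
    linarith
  refine mem_iUnion.2 ⟨i, -dist x y, ⟨neg_le_neg le_inradius, neg_nonpos.2 hpos.le⟩, ?_⟩
  rwa [neg_smul, sub_neg_eq_add, ← y_sub_x, add_sub_cancel]

variable [FiniteDimensional ℝ E] [MeasurableSpace E] [BorelSpace E]

lemma ofReal_mul_surfaceArea_polyhedron_le {k : ℕ} {ν : Fin k → E} {h : Fin k → ℝ}
    (hν : ∀ i, ‖ν i‖ = 1) {x : E} {r : ℝ} (hr : 0 < r) (hball : ball x r ⊆ polyhedron ν h) :
    ENNReal.ofReal r * surfaceArea (polyhedron ν h) ≤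
      finrank ℝ E * volume (polyhedron ν h) := by
  obtain ⟨F, hFm, hF_disj, hF_union, hF⟩ := exists_measurable_partition_frontier_polyhedron ν h
  have hx : x ∈ polyhedron ν h := hball (mem_ball_self hr)
  have hPo := isOpen_polyhedron ν h
  have hPc := convex_polyhedron ν h
  have F_subset (i : Fin k) : F i ⊆ frontier (polyhedron ν h) := hF_union ▸ subset_iUnion F i
  have r_le (i : Fin k) : r ≤ h i - ⟪ν i, x⟫ := by
    linarith [inner_add_le_of_ball_subset_polyhedron hr hball (hν i)]
  have height_eq (i : Fin k) : ∀ y ∈ F i, ⟪ν i, y - x⟫ = h i - ⟪ν i, x⟫ := fun y hy => by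
    rw [inner_sub_right, hF i y hy]
  calc ENNReal.ofReal r * surfaceArea (polyhedron ν h)
      = ∑ i, ENNReal.ofReal r * μHE[finrank ℝ E - 1] (F i) := by
        rw [surfaceArea, ← hF_union, measure_iUnion hF_disj hFm, tsum_fintype, Finset.mul_sum]
    _ ≤ ∑ i, ENNReal.ofReal (h i - ⟪ν i, x⟫) * μHE[finrank ℝ E - 1] (F i) := by
        gcongr with i
        exact r_le i
    _ = ∑ i, finrank ℝ E * volume (openCone x (F i)) :=
        Finset.sum_congr rfl fun i _ =>
          (finrank_mul_volume_openCone (hν i) (hFm i) (hr.trans_le (r_le i)) (height_eq i)).symm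
    _ = finrank ℝ E * volume (⋃ i, openCone x (F i)) := by
        rw [measure_iUnion (fun i j hij => disjoint_openCone hPo hPc hx (F_subset i) (F_subset j)
          (hF_disj hij)) fun i => measurableSet_openCone (hFm i) (hr.trans_le (r_le i))
          (height_eq i), tsum_fintype, Finset.mul_sum]
    _ ≤ finrank ℝ E * volume (polyhedron ν h) := by
        gcongr
        exact iUnion_subset fun i => openCone_subset hPo hPc hx (F_subset i)

lemma volume_polyhedron_le_inradius_mul_surfaceArea [Nontrivial E] {k : ℕ} {ν : Fin k → E}
    {h : Fin k → ℝ} (hν : ∀ i, ‖ν i‖ = 1) (hb : Bornology.IsBounded (polyhedron ν h)) :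
    volume (polyhedron ν h) ≤ inradius (polyhedron ν h) * surfaceArea (polyhedron ν h) := by
  obtain ⟨F, hFm, hF_disj, hF_union, hF⟩ := exists_measurable_partition_frontier_polyhedron ν h
  set ρ := inradius (polyhedron ν h)
  calc volume (polyhedron ν h)
      ≤ ∑ i, volume (prism (ν i) (Icc (-ρ.toReal) 0) (F i)) :=
        (measure_mono (polyhedron_subset_iUnion_prism hν hb hF_union hF)).trans
          (measure_iUnion_fintype_le _ _)
    _ = ∑ i, ρ * μHE[finrank ℝ E - 1] (F i) := by
        refine Finset.sum_congr rfl fun i _ => ?_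
        rw [volume_prism (hν i) measurableSet_Icc (hFm i) (hF i), Real.volume_Icc, zero_sub,
          neg_neg, ENNReal.ofReal_toReal (inradius_ne_top hb)]
    _ = ρ * surfaceArea (polyhedron ν h) := by
        rw [surfaceArea, ← hF_union, measure_iUnion hF_disj hFm, tsum_fintype, Finset.mul_sum]

end Polyhedra

section PolyhedralApproximation

lemma isBounded_image_homothety {E : Type*} [NormedAddCommGroup E] [NormedSpace ℝ E]
    {K : Set E} (hK : Bornology.IsBounded K) (x : E) (c : ℝ) :
    Bornology.IsBounded (homothety x c '' K) := by
  obtain ⟨r, hr⟩ := hK.subset_closedBall x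
  refine isBounded_closedBall.subset (?_ : _ ⊆ closedBall x (‖c‖ * r))
  rintro _ ⟨z, hz, rfl⟩
  rw [mem_closedBall, dist_homothety_center, dist_comm]
  gcongr
  exact hr hz

variable {E : Type*} [NormedAddCommGroup E] [InnerProductSpace ℝ E]

lemma exists_unit_normal_separating_point [CompleteSpace E] {K : Set E} (hKc : Convex ℝ K)
    (hne : K.Nonempty) {y : E} (hy : y ∉ closure K) :
    ∃ (ν : E) (u : ℝ), ‖ν‖ = 1 ∧ (∀ a ∈ K, ⟪ν, a⟫ < u) ∧ u < ⟪ν, y⟫ := by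
  obtain ⟨f, u, hK, hu⟩ := geometric_hahn_banach_closed_point hKc.closure isClosed_closure hy
  obtain ⟨ν, rfl⟩ := (InnerProductSpace.toDual ℝ E).surjective f
  simp only [InnerProductSpace.toDual_apply_apply] at hK hu
  have hν : ν ≠ 0 := by
    rintro rfl
    obtain ⟨a, ha⟩ := hne
    simpa using (hK a (subset_closure ha)).trans hu
  have hνpos : 0 < ‖ν‖⁻¹ := inv_pos.2 (norm_pos_iff.2 hν)
  refine ⟨‖ν‖⁻¹ • ν, ‖ν‖⁻¹ * u, norm_smul_inv_norm hν, fun a ha => ?_, ?_⟩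
  · rw [real_inner_smul_left]
    exact mul_lt_mul_of_pos_left (hK a (subset_closure ha)) hνpos
  · rw [real_inner_smul_left]
    exact mul_lt_mul_of_pos_left hu hνpos

lemma exists_polyhedron_between [FiniteDimensional ℝ E] {K U : Set E} (hKc : Convex ℝ K)
    (hne : K.Nonempty) (hUo : IsOpen U) (hUb : Bornology.IsBounded U) (hKU : closure K ⊆ U) :
    ∃ (k : ℕ) (ν : Fin k → E) (h : Fin k → ℝ),
      (∀ i, ‖ν i‖ = 1) ∧ K ⊆ polyhedron ν h ∧ polyhedron ν h ⊆ U := by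
  have notMem_closure (y : E) (hy : y ∈ frontier U) : y ∉ closure K :=
    fun hyK => (hUo.frontier_eq ▸ hy).2 (hKU hyK)
  choose! ν u hν hKu hu using fun y hy =>
    exists_unit_normal_separating_point hKc hne (notMem_closure y hy)
  have frontier_compact : IsCompact (frontier U) :=
    hUb.isCompact_closure.of_isClosed_subset isClosed_frontier frontier_subset_closure
  obtain ⟨t, ht, hcover⟩ := frontier_compact.elim_nhds_subcover (fun y => {x | u y < ⟪ν y, x⟫})
    fun y hy => (isOpen_lt continuous_const (by fun_prop)).mem_nhds (hu y hy)
  have mem_frontier (i : Fin t.card) : (t.equivFin.symm i : E) ∈ frontier U :=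
    ht _ (t.equivFin.symm i).2
  have K_subset : K ⊆ polyhedron (fun i => ν (t.equivFin.symm i)) fun i => u (t.equivFin.symm i) :=
    fun x hx i => hKu _ (mem_frontier i) x hx
  refine ⟨t.card, _, _, fun i => hν _ (mem_frontier i), K_subset, ?_⟩
  rw [← hUo.interior_eq]
  refine subset_interior_of_isPreconnected_of_disjoint_frontier
    (convex_polyhedron _ _).isPreconnected (disjoint_left.2 fun x hx hxU => ?_)
    (hne.mono fun x hx => ⟨K_subset hx, subset_closure (hKU (subset_closure hx))⟩)
  obtain ⟨y, hy, hxy⟩ := mem_iUnion₂.1 (hcover hxU)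
  have := hx (t.equivFin ⟨y, hy⟩)
  simp only [Equiv.symm_apply_apply] at this
  exact lt_asymm this hxy

lemma exists_polyhedron_between_homothety [FiniteDimensional ℝ E] {K : Set E} (hKo : IsOpen K)
    (hKc : Convex ℝ K) (hKb : Bornology.IsBounded K) {x : E} (hx : x ∈ K) {c : ℝ} (hc : 1 < c) :
    ∃ (k : ℕ) (ν : Fin k → E) (h : Fin k → ℝ),
      (∀ i, ‖ν i‖ = 1) ∧ K ⊆ polyhedron ν h ∧ polyhedron ν h ⊆ homothety x c '' K :=
  exists_polyhedron_between hKc ⟨x, hx⟩ (homothety_isOpenMap x c (by positivity) K hKo)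
    (isBounded_image_homothety hKb x c)
    ((hKc.closure_subset_interior_image_homothety_of_one_lt (hKo.interior_eq.symm ▸ hx) c hc).trans
      interior_subset)

end PolyhedralApproximation

section ConvexBodies

lemma le_of_forall_one_lt_le_ofReal_pow_mul {a b : ℝ≥0∞} (k : ℕ)
    (h : ∀ c : ℝ, 1 < c → a ≤ ENNReal.ofReal (c ^ k) * b) : a ≤ b := by
  rcases eq_or_ne b ∞ with rfl | hb
  · exact le_top
  have limit : Filter.Tendsto (fun c : ℝ => ENNReal.ofReal (c ^ k) * b) (nhdsWithin 1 (Ioi 1))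
      (nhds (ENNReal.ofReal (1 ^ k) * b)) :=
    ENNReal.Tendsto.mul_const (ENNReal.tendsto_ofReal
      ((continuous_pow k).continuousWithinAt (s := Ioi (1 : ℝ)))) (.inr hb)
  rw [one_pow, ENNReal.ofReal_one, one_mul] at limit
  exact ge_of_tendsto limit (eventually_mem_nhdsWithin.mono h)

variable {E : Type*} [NormedAddCommGroup E] [InnerProductSpace ℝ E] [FiniteDimensional ℝ E]
  [MeasurableSpace E] [BorelSpace E]

lemma volume_image_homothety_of_pos (x : E) {c : ℝ} (hc : 0 < c) (K : Set E) :
    volume (homothety x c '' K) = ENNReal.ofReal (c ^ finrank ℝ E) * volume K := by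
  rw [Measure.addHaar_image_homothety, abs_of_pos (pow_pos hc _)]

theorem inradius_mul_surfaceArea_le {K : Set E} (hKo : IsOpen K) (hKc : Convex ℝ K)
    (hKb : Bornology.IsBounded K) :
    inradius K * surfaceArea K ≤ finrank ℝ E * volume K := by
  simp_rw [inradius, ENNReal.iSup_mul]
  refine iSup₂_le fun x r => iSup_le fun hball => ?_
  rcases le_or_gt r 0 with hr | hr
  · simp [ENNReal.ofReal_of_nonpos hr]
  refine le_of_forall_one_lt_le_ofReal_pow_mul (finrank ℝ E) fun c hc => ?_
  obtain ⟨k, ν, h, hν, hKP, hPK⟩ :=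
    exists_polyhedron_between_homothety hKo hKc hKb (hball (mem_ball_self hr)) hc
  calc ENNReal.ofReal r * surfaceArea K
      ≤ ENNReal.ofReal r * surfaceArea (polyhedron ν h) := by
        gcongr
        exact surfaceArea_le_of_convex_subset hKo hKc hKP
          ((isBounded_image_homothety hKb x c).subset hPK)
    _ ≤ finrank ℝ E * volume (polyhedron ν h) :=
        ofReal_mul_surfaceArea_polyhedron_le hν hr (hball.trans hKP)
    _ ≤ finrank ℝ E * volume (homothety x c '' K) := by gcongr
    _ = ENNReal.ofReal (c ^ finrank ℝ E) * (finrank ℝ E * volume K) := by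
        rw [volume_image_homothety_of_pos x (one_pos.trans hc), mul_left_comm]

lemma surfaceArea_ne_top {K : Set E} (hKo : IsOpen K) (hKc : Convex ℝ K)
    (hKb : Bornology.IsBounded K) : surfaceArea K ≠ ∞ := by
  rcases K.eq_empty_or_nonempty with rfl | hne
  · simp [surfaceArea]
  intro htop
  have := inradius_mul_surfaceArea_le hKo hKc hKb
  rw [htop, ENNReal.mul_top (inradius_pos (hKo.interior_eq.symm ▸ hne)).ne', top_le_iff] at this
  exact ENNReal.mul_ne_top (ENNReal.natCast_ne_top _) hKb.measure_lt_top.ne this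

theorem volume_le_inradius_mul_surfaceArea [Nontrivial E] {K : Set E} (hKo : IsOpen K)
    (hKc : Convex ℝ K) (hKb : Bornology.IsBounded K) :
    volume K ≤ inradius K * surfaceArea K := by
  rcases K.eq_empty_or_nonempty with rfl | ⟨x, hx⟩
  · simp
  refine le_of_forall_one_lt_le_ofReal_pow_mul (finrank ℝ E) fun c hc => ?_
  have hc₀ : 0 < c := one_pos.trans hc
  set K' := homothety x c⁻¹ '' K
  have image_K' : homothety x c '' K' = K := by
    rw [image_image]
    simp [← homothety_mul_apply, mul_inv_cancel₀ hc₀.ne']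
  obtain ⟨k, ν, h, hν, hKP, hPK⟩ := exists_polyhedron_between_homothety
    (homothety_isOpenMap x c⁻¹ (by positivity) K hKo) (hKc.affine_image _)
    (isBounded_image_homothety hKb x c⁻¹) ⟨x, hx, homothety_apply_same x c⁻¹⟩ hc
  rw [image_K'] at hPK
  calc volume K = ENNReal.ofReal (c ^ finrank ℝ E) * volume K' := by
        rw [← volume_image_homothety_of_pos x hc₀, image_K']
    _ ≤ ENNReal.ofReal (c ^ finrank ℝ E) * volume (polyhedron ν h) := by gcongr
    _ ≤ ENNReal.ofReal (c ^ finrank ℝ E) *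
          (inradius (polyhedron ν h) * surfaceArea (polyhedron ν h)) := by
        gcongr
        exact volume_polyhedron_le_inradius_mul_surfaceArea hν (hKb.subset hPK)
    _ ≤ ENNReal.ofReal (c ^ finrank ℝ E) * (inradius K * surfaceArea K) := by
        gcongr
        · exact inradius_mono hPK
        · exact surfaceArea_le_of_convex_subset (isOpen_polyhedron ν h) (convex_polyhedron ν h)
            hPK hKb

theorem volume_mul_surfaceArea_le_of_convex_subset [Nontrivial E] {X K : Set E} (hXo : IsOpen X)
    (hXc : Convex ℝ X) (hKo : IsOpen K) (hKc : Convex ℝ K) (hKb : Bornology.IsBounded K)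
    (hXK : X ⊆ K) :
    volume X * surfaceArea K ≤ surfaceArea X * (finrank ℝ E * volume K) := calc
  volume X * surfaceArea K ≤ inradius X * surfaceArea X * surfaceArea K := by
    gcongr
    exact volume_le_inradius_mul_surfaceArea hXo hXc (hKb.subset hXK)
  _ ≤ inradius K * surfaceArea X * surfaceArea K := by
    gcongr
    exact inradius_mono hXK
  _ = surfaceArea X * (inradius K * surfaceArea K) := by ring
  _ ≤ surfaceArea X * (finrank ℝ E * volume K) := by
    gcongr surfaceArea X * ?_
    exact inradius_mul_surfaceArea_le hKo hKc hKb

lemma exists_pos_toReal_surfaceArea_eq_mul [Nontrivial E] :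
    ∃ κ : ℝ, 0 < κ ∧ ∀ K : Set E,
      (surfaceArea K).toReal = κ * (μH[(finrank ℝ E : ℝ) - 1] (frontier K)).toReal := by
  refine ⟨_, NNReal.coe_pos.2 (pos_iff_ne_zero.2
    (Measure.addHaarScalarFactor_volume_hausdorffMeasure_ne_zero (finrank ℝ E - 1))), fun K => ?_⟩
  rw [← Nat.cast_pred finrank_pos, surfaceArea, Measure.euclideanHausdorffMeasure_def,
    Measure.smul_apply, ENNReal.smul_def, smul_eq_mul, ENNReal.toReal_mul, ENNReal.coe_toReal]

theorem surface_div_volume_le_of_convex_subset [Nontrivial E] {X K : Set E} (hXo : IsOpen X)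
    (hXc : Convex ℝ X) (hX : X.Nonempty) (hKo : IsOpen K) (hKc : Convex ℝ K)
    (hKb : Bornology.IsBounded K) (hXK : X ⊆ K) :
    (μH[(finrank ℝ E : ℝ) - 1] (frontier K)).toReal / (finrank ℝ E * (volume K).toReal) ≤
      (μH[(finrank ℝ E : ℝ) - 1] (frontier X)).toReal / (volume X).toReal := by
  have volume_pos {A : Set E} (hAo : IsOpen A) (hA : A.Nonempty) (hAK : A ⊆ K) :
      0 < (volume A).toReal :=
    ENNReal.toReal_pos (hAo.measure_pos _ hA).ne' (hKb.subset hAK).measure_lt_top.ne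
  have finrank_pos : (0 : ℝ) < finrank ℝ E := Nat.cast_pos.2 finrank_pos
  have rhs_ne_top : surfaceArea X * (finrank ℝ E * volume K) ≠ ∞ :=
    ENNReal.mul_ne_top (surfaceArea_ne_top hXo hXc (hKb.subset hXK))
      (ENNReal.mul_ne_top (ENNReal.natCast_ne_top _) hKb.measure_lt_top.ne)
  obtain ⟨κ, hκ, toReal_surfaceArea⟩ := exists_pos_toReal_surfaceArea_eq_mul (E := E)
  have key := ENNReal.toReal_mono rhs_ne_top
    (volume_mul_surfaceArea_le_of_convex_subset hXo hXc hKo hKc hKb hXK)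
  simp only [ENNReal.toReal_mul, toReal_surfaceArea, ENNReal.toReal_natCast] at key
  rw [div_le_div_iff₀ (mul_pos finrank_pos (volume_pos hKo (hX.mono hXK) subset_rfl))
    (volume_pos hXo hX hXK)]
  refine le_of_mul_le_mul_left ?_ hκ
  linarith

end ConvexBodies

/-- Lower bound for the Cheeger constant of a bounded open convex set `Ω ⊂ ℝⁿ`:
`h(Ω) ≥ |∂Ω| / (n |Ω|)`. -/
theorem cheeger_constant_lower_bound
    (n : ℕ)
    (Ω : Set (EuclideanSpace ℝ (Fin n)))
    (hΩo : IsOpen Ω) (hΩb : Bornology.IsBounded Ω)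
    (hΩc : Convex ℝ Ω) (hΩne : (interior Ω).Nonempty) :
    (μH[(n : ℝ) - 1] (frontier Ω)).toReal / ((n : ℝ) * (volume Ω).toReal) ≤
      cheegerConstant Ω := by
  refine le_csInf ⟨_, Ω, hΩo, hΩb, hΩc, hΩne, subset_closure, rfl⟩ ?_
  rintro _ ⟨X, hXo, -, hXc, hXne, hX, rfl⟩
  rcases n with - | m
  · rw [Nat.cast_zero, zero_mul, div_zero]
    positivity
  have hXΩ : X ⊆ Ω := by
    rw [← hΩo.interior_eq, ← hΩc.interior_closure_eq_interior_of_nonempty_interior hΩne]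
    exact interior_maximal hX hXo
  simpa only [finrank_euclideanSpace_fin] using
    surface_div_volume_le_of_convex_subset hXo hXc (hXne.mono interior_subset) hΩo hΩc hΩb hXΩ
end

section
/- Let ω_n denote the volume of the unit ball in ℝⁿ. Then ω_n^{1/n} √n → √(2πe) as n → ∞. -/
open MeasureTheory Filter

/-!
No form of Stirling's formula is needed: crude bounds on `Γ (x + 1) = ∫ exp (-t) * t ^ x` suffice,
because they are only used after taking `x`-th roots. Discarding `t ≤ x` gives
`(x / e) ^ x ≤ Γ (x + 1)`. The tangent bound `t ^ x ≤ (a / e) ^ x * exp (x * t / a)`, with equality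
at `t = a`, gives `Γ (x + 1) ≤ (a / e) ^ x * (a / (a - x))` for `a > x`. With `a = x + 1` both
bounds yield `Γ (x + 1) ^ (1 / x) ~ x / e`, and `ω_n = π ^ (n / 2) / Γ (n / 2 + 1)`.
-/

section GammaBounds

open Real Set

variable {a t x : ℝ}

lemma rpow_le_div_exp_one_rpow_mul_exp (ha : 0 < a) (ht : 0 ≤ t) (hx : 0 ≤ x) :
    t ^ x ≤ (a / exp 1) ^ x * exp (x * t / a) := by
  have tangent : t ≤ a / exp 1 * exp (t / a) := by
    calc t = a * (t / a - 1 + 1) := by field_simp; ring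
      _ ≤ a * exp (t / a - 1) := by gcongr; exact add_one_le_exp _
      _ = a / exp 1 * exp (t / a) := by rw [exp_sub]; ring
  calc t ^ x ≤ (a / exp 1 * exp (t / a)) ^ x := rpow_le_rpow ht tangent hx
    _ = (a / exp 1) ^ x * exp (x * t / a) := by
      rw [mul_rpow (by positivity) (by positivity), ← exp_mul]
      ring_nf

lemma integrableOn_exp_neg_mul_rpow (hx : -1 < x) :
    IntegrableOn (fun t => exp (-t) * t ^ x) (Ioi 0) := by
  simpa using GammaIntegral_convergent (s := x + 1) (by linarith)

lemma Gamma_add_one_eq_integral (hx : -1 < x) :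
    Gamma (x + 1) = ∫ t in Ioi 0, exp (-t) * t ^ x := by
  simpa using Gamma_eq_integral (s := x + 1) (by linarith)

lemma div_exp_one_rpow_le_Gamma_add_one (hx : 0 ≤ x) : (x / exp 1) ^ x ≤ Gamma (x + 1) := by
  have hsub : Ioi x ⊆ Ioi 0 := Ioi_subset_Ioi hx
  have hint := integrableOn_exp_neg_mul_rpow (x := x) (by linarith)
  calc (x / exp 1) ^ x = ∫ t in Ioi x, exp (-t) * x ^ x := by
        rw [integral_mul_const, integral_exp_neg_Ioi, div_rpow hx (exp_pos 1).le, exp_one_rpow,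
          exp_neg, div_eq_inv_mul]
    _ ≤ ∫ t in Ioi x, exp (-t) * t ^ x := by
        refine setIntegral_mono_on ((integrableOn_exp_neg_Ioi x).mul_const _) (hint.mono_set hsub)
          measurableSet_Ioi fun t ht => ?_
        gcongr
        exact ht.le
    _ ≤ ∫ t in Ioi 0, exp (-t) * t ^ x := by
        refine setIntegral_mono_set hint ?_ hsub.eventuallyLE
        filter_upwards [ae_restrict_mem measurableSet_Ioi] with t ht
        have : 0 < t := ht
        positivity
    _ = Gamma (x + 1) := (Gamma_add_one_eq_integral (by linarith)).symm

lemma Gamma_add_one_le_div_exp_one_rpow_mul (hx : 0 ≤ x) (hxa : x < a) :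
    Gamma (x + 1) ≤ (a / exp 1) ^ x * (a / (a - x)) := by
  have ha : 0 < a := hx.trans_lt hxa
  have hrate : (x - a) / a < 0 := div_neg_of_neg_of_pos (sub_neg.2 hxa) ha
  calc Gamma (x + 1) = ∫ t in Ioi 0, exp (-t) * t ^ x := Gamma_add_one_eq_integral (by linarith)
    _ ≤ ∫ t in Ioi 0, (a / exp 1) ^ x * exp ((x - a) / a * t) := by
        refine setIntegral_mono_on (integrableOn_exp_neg_mul_rpow (x := x) (by linarith))
          ((integrableOn_exp_mul_Ioi hrate 0).const_mul _) measurableSet_Ioi fun t ht => ?_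
        calc exp (-t) * t ^ x ≤ exp (-t) * ((a / exp 1) ^ x * exp (x * t / a)) := by
              gcongr
              exact rpow_le_div_exp_one_rpow_mul_exp ha (le_of_lt ht) hx
          _ = (a / exp 1) ^ x * exp ((x - a) / a * t) := by
              rw [mul_left_comm, ← exp_add]
              congr 2
              field_simp
              ring
    _ = (a / exp 1) ^ x * (a / (a - x)) := by
        rw [integral_const_mul, integral_exp_mul_Ioi hrate, mul_zero, exp_zero, neg_div,
          one_div_div, ← div_neg, neg_sub]

lemma tendsto_add_one_rpow_inv_atTop :
    Tendsto (fun x : ℝ => (x + 1) ^ x⁻¹) atTop (nhds 1) := by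
  have h := (tendsto_rpow_div_mul_add 1 1 (-1) zero_ne_one).comp
    (tendsto_atTop_add_const_right atTop (1 : ℝ) tendsto_id)
  exact h.congr fun x => by simp

lemma tendsto_Gamma_add_one_rpow_inv_div_atTop :
    Tendsto (fun x : ℝ => Gamma (x + 1) ^ x⁻¹ / x) atTop (nhds (exp 1)⁻¹) := by
  have upper : Tendsto (fun x : ℝ => (exp 1)⁻¹ * (1 + x⁻¹) * (x + 1) ^ x⁻¹) atTop
      (nhds (exp 1)⁻¹) := by
    simpa using ((tendsto_inv_atTop_zero.const_add 1).const_mul (exp 1)⁻¹).mul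
      tendsto_add_one_rpow_inv_atTop
  refine tendsto_of_tendsto_of_tendsto_of_le_of_le' tendsto_const_nhds upper ?_ ?_
  · filter_upwards [eventually_gt_atTop 0] with x hx
    calc (exp 1)⁻¹ = ((x / exp 1) ^ x) ^ x⁻¹ / x := by
          rw [rpow_rpow_inv (by positivity) hx.ne']
          field_simp
      _ ≤ Gamma (x + 1) ^ x⁻¹ / x := by
          gcongr
          exact div_exp_one_rpow_le_Gamma_add_one hx.le
  · filter_upwards [eventually_gt_atTop 0] with x hx
    have hΓ : Gamma (x + 1) ≤ ((x + 1) / exp 1) ^ x * (x + 1) := by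
      simpa using Gamma_add_one_le_div_exp_one_rpow_mul hx.le (lt_add_one x)
    calc Gamma (x + 1) ^ x⁻¹ / x ≤ (((x + 1) / exp 1) ^ x * (x + 1)) ^ x⁻¹ / x := by
          gcongr
      _ = (exp 1)⁻¹ * (1 + x⁻¹) * (x + 1) ^ x⁻¹ := by
          rw [mul_rpow (by positivity) (by positivity), rpow_rpow_inv (by positivity) hx.ne']
          field_simp

end GammaBounds

section UnitBall

open Real Module

variable {E : Type*} [NormedAddCommGroup E] [InnerProductSpace ℝ E] [FiniteDimensional ℝ E]
  [MeasurableSpace E] [BorelSpace E] [Nontrivial E]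

lemma toReal_volume_unitBall_rpow_inv_finrank (c : E) :
    (volume (Metric.ball c 1)).toReal ^ (finrank ℝ E : ℝ)⁻¹ =
      √π / √(Gamma (finrank ℝ E / 2 + 1) ^ (finrank ℝ E / 2 : ℝ)⁻¹) := by
  have hΓ : 0 < Gamma (finrank ℝ E / 2 + 1 : ℝ) := Gamma_pos_of_pos (by positivity)
  rw [InnerProductSpace.volume_ball, ENNReal.ofReal_one, one_pow, one_mul,
    ENNReal.toReal_ofReal (by positivity), div_rpow (by positivity) hΓ.le,
    pow_rpow_inv_natCast (sqrt_nonneg π) finrank_pos.ne', sqrt_eq_rpow (Gamma _ ^ _),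
    ← rpow_mul hΓ.le]
  congr 2
  field_simp

lemma toReal_volume_unitBall_rpow_inv_finrank_mul_sqrt (c : E) :
    (volume (Metric.ball c 1)).toReal ^ (finrank ℝ E : ℝ)⁻¹ * √(finrank ℝ E) =
      √(2 * π / (Gamma (finrank ℝ E / 2 + 1) ^ (finrank ℝ E / 2 : ℝ)⁻¹ / (finrank ℝ E / 2))) := by
  rw [toReal_volume_unitBall_rpow_inv_finrank, ← sqrt_div pi_nonneg,
    ← sqrt_mul' _ (Nat.cast_nonneg _)]
  congr 1
  field_simp

end UnitBall

/-- If `ω_n` denotes the volume of the unit ball in `ℝⁿ`, then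
`ω_n^(1/n) √n → √(2πe)` as `n → ∞`. -/
theorem unit_ball_volume_root_limit :
    Tendsto
      (fun n : ℕ =>
        (volume (Metric.ball (0 : EuclideanSpace ℝ (Fin n)) 1)).toReal ^ ((n : ℝ)⁻¹) *
          Real.sqrt n)
      atTop (nhds (Real.sqrt (2 * Real.pi * Real.exp 1))) := by
  have half_atTop : Tendsto (fun n : ℕ => (n : ℝ) / 2) atTop atTop :=
    tendsto_natCast_atTop_atTop.atTop_div_const two_pos
  have sqrt_limit := ((tendsto_const_nhds (x := 2 * Real.pi)).div
    (tendsto_Gamma_add_one_rpow_inv_div_atTop.comp half_atTop)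
    (inv_ne_zero (Real.exp_pos 1).ne')).sqrt
  rw [div_inv_eq_mul] at sqrt_limit
  refine sqrt_limit.congr' ?_
  filter_upwards [eventually_ne_atTop 0] with n hn
  have : NeZero n := ⟨hn⟩
  simpa using (toReal_volume_unitBall_rpow_inv_finrank_mul_sqrt (0 : EuclideanSpace ℝ (Fin n))).symm
end
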